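/- Let n ≥ 2, s ∈ (0,1), α ∈ (0,2s), and let x = (x′, xₙ) ∈ ℝⁿ with xₙ < 0. Then ∫_{{y ∈ ℝⁿ : yₙ > 0}} yₙ^α / |x − y|^{n+2s} dy = A(n,s) · (∫₀^∞ t^α (1+t)^{−(1+2s)} dt) · |xₙ|^{α−2s}, all integrals being absolutely convergent. -/

import Mathlib

/-!
Write `y = (w, t)` with `t = yₙ > 0`, and put `a = -xₙ > 0`, so that
`|x - y|² = (t + a)² + |x′ - w|²`. By Tonelli the integral may be computed slice by slice.
On the slice at height `t`, the substitution `w = x′ - (t + a) z` gives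
`∫ ((t + a)² + |x′ - w|²)^{-(n+2s)/2} dw = A(n,s) (t + a)^{-(1+2s)}` (`integral_slice`),
where the exponent is `(n - 1) - (n + 2s)`. What remains is the one-dimensional integral
`∫₀^∞ t^α (t + a)^{-(1+2s)} dt`, and `t = a u` extracts the factor `a^{α-2s}`
(`integral_beta_scaled`). It converges at infinity because
`t^α (1 + t)^{-(1+2s)} ≤ (1 + t)^{α-1-2s}` and `α < 2s`. The integrand is nonnegative, so
these slice computations also give absolute convergence in `ℝⁿ`.
-/

open MeasureTheory Filter Set Topology

/-- `A(n,s) = ∫_{ℝ^{n−1}} (1+|z|²)^{−(n+2s)/2} dz`, with `n = m+1`. -/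
noncomputable def Aconst (m : ℕ) (s : ℝ) : ℝ :=
  ∫ z : EuclideanSpace ℝ (Fin m), (1 + ‖z‖ ^ 2) ^ (-(((m : ℝ) + 1) + 2 * s) / 2)

/-- The splitting `y ↦ (yₙ, y′)` of `ℝ^{m+1}`, with the distinguished last coordinate first. -/
noncomputable def splitLast (m : ℕ) :
    EuclideanSpace ℝ (Fin (m + 1)) ≃ᵐ ℝ × EuclideanSpace ℝ (Fin m) :=
  ((MeasurableEquiv.toLp 2 (Fin (m + 1) → ℝ)).symm.trans
    (MeasurableEquiv.piFinSuccAbove (fun _ => ℝ) (Fin.last m))).trans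
    ((MeasurableEquiv.refl ℝ).prodCongr (MeasurableEquiv.toLp 2 (Fin m → ℝ)))

lemma splitLast_fst (m : ℕ) (y : EuclideanSpace ℝ (Fin (m + 1))) :
    (splitLast m y).1 = y (Fin.last m) := rfl

lemma splitLast_snd_apply (m : ℕ) (y : EuclideanSpace ℝ (Fin (m + 1))) (i : Fin m) :
    (splitLast m y).2 i = y i.castSucc := by
  rw [← Fin.succAbove_last_apply]
  rfl

lemma measurePreserving_splitLast (m : ℕ) : MeasurePreserving (splitLast m) := by
  have h1 := EuclideanSpace.volume_preserving_symm_measurableEquiv_toLp (Fin (m + 1))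
  have h2 := volume_preserving_piFinSuccAbove (fun _ : Fin (m + 1) => ℝ) (Fin.last m)
  have h3 : MeasurePreserving ((MeasurableEquiv.refl ℝ).prodCongr
      (MeasurableEquiv.toLp 2 (Fin m → ℝ))) :=
    (MeasurePreserving.id (volume : Measure ℝ)).prod
      (PiLp.volume_preserving_toLp (Fin m))
  exact h3.comp (h2.comp h1)

lemma norm_sub_sq_splitLast (m : ℕ) (x y : EuclideanSpace ℝ (Fin (m + 1))) :
    ‖x - y‖ ^ 2 = ((splitLast m y).1 - x (Fin.last m)) ^ 2
      + ‖(splitLast m x).2 - (splitLast m y).2‖ ^ 2 := by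
  rw [EuclideanSpace.real_norm_sq_eq, EuclideanSpace.real_norm_sq_eq, Fin.sum_univ_castSucc]
  simp only [PiLp.sub_apply, splitLast_fst, splitLast_snd_apply]
  ring

lemma slice_eq (m : ℕ) (p d : ℝ) (hd : 0 < d) (v w : EuclideanSpace ℝ (Fin m)) :
    (d ^ 2 + ‖v - w‖ ^ 2) ^ (-p / 2)
      = d ^ (-p) * (1 + ‖d⁻¹ • (v - w)‖ ^ 2) ^ (-p / 2) := by
  have h : d ^ 2 + ‖v - w‖ ^ 2 = d ^ 2 * (1 + ‖d⁻¹ • (v - w)‖ ^ 2) := by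
    rw [norm_smul, Real.norm_of_nonneg (by positivity)]
    field_simp
  rw [h, Real.mul_rpow (by positivity) (by positivity), ← Real.rpow_natCast,
    ← Real.rpow_mul hd.le]
  congr 2
  push_cast
  ring

lemma integrable_slice (m : ℕ) (s d : ℝ) (hs : 0 < s) (hd : 0 < d)
    (v : EuclideanSpace ℝ (Fin m)) :
    Integrable fun w => (d ^ 2 + ‖v - w‖ ^ 2) ^ (-(((m : ℝ) + 1) + 2 * s) / 2) := by
  have h : Integrable fun z : EuclideanSpace ℝ (Fin m) =>
      (1 + ‖z‖ ^ 2) ^ (-(((m : ℝ) + 1) + 2 * s) / 2) :=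
    integrable_rpow_neg_one_add_norm_sq (by rw [finrank_euclideanSpace_fin]; linarith)
  simp only [slice_eq m _ d hd]
  exact (((integrable_comp_smul_iff volume _ (inv_ne_zero hd.ne')).2 h).comp_sub_left v).const_mul _

lemma integral_slice (m : ℕ) (s d : ℝ) (hd : 0 < d) (v : EuclideanSpace ℝ (Fin m)) :
    ∫ w, (d ^ 2 + ‖v - w‖ ^ 2) ^ (-(((m : ℝ) + 1) + 2 * s) / 2)
      = Aconst m s * d ^ (-(1 + 2 * s)) := by
  simp only [slice_eq m _ d hd]
  rw [integral_const_mul, integral_sub_left_eq_self (fun z : EuclideanSpace ℝ (Fin m) =>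
      (1 + ‖d⁻¹ • z‖ ^ 2) ^ (-(((m : ℝ) + 1) + 2 * s) / 2)),
    Measure.integral_comp_inv_smul_of_nonneg volume (fun z : EuclideanSpace ℝ (Fin m) =>
      (1 + ‖z‖ ^ 2) ^ (-(((m : ℝ) + 1) + 2 * s) / 2)) hd.le, finrank_euclideanSpace_fin,
    smul_eq_mul, ← mul_assoc, ← Real.rpow_natCast, ← Real.rpow_add hd, mul_comm, Aconst]
  congr 2
  ring

lemma integrableOn_beta (s α : ℝ) (hα : α ∈ Set.Ioo (0 : ℝ) (2 * s)) :
    IntegrableOn (fun t : ℝ => t ^ α * (1 + t) ^ (-(1 + 2 * s))) (Set.Ioi 0) := by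
  have h : IntegrableOn (fun t : ℝ => (t + 1) ^ (α + -(1 + 2 * s))) (Set.Ioi 0) :=
    integrableOn_add_rpow_Ioi_of_lt (by linarith [hα.2]) (by norm_num)
  refine Integrable.mono' h (by fun_prop) ?_
  filter_upwards [ae_restrict_mem measurableSet_Ioi] with t ht
  have ht : 0 < t := ht
  rw [Real.norm_of_nonneg (by positivity), Real.rpow_add (by positivity), add_comm t 1]
  gcongr
  · exact hα.1.le
  · linarith

/-- The integrand `t ↦ t^α (t + a)^{-(1+2s)}` after the substitution `t = a u`. -/
lemma beta_scaled_eq (s α a u : ℝ) (ha : 0 < a) (hu : 0 < u) :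
    (a * u) ^ α * (a * u + a) ^ (-(1 + 2 * s))
      = a ^ (α - 2 * s - 1) * (u ^ α * (1 + u) ^ (-(1 + 2 * s))) := by
  rw [show a * u + a = a * (1 + u) by ring, Real.mul_rpow ha.le hu.le,
    Real.mul_rpow ha.le (by positivity), show α - 2 * s - 1 = α + -(1 + 2 * s) by ring,
    Real.rpow_add ha]
  ring

lemma integrableOn_beta_scaled (s α a : ℝ) (hα : α ∈ Set.Ioo (0 : ℝ) (2 * s)) (ha : 0 < a) :
    IntegrableOn (fun t : ℝ => t ^ α * (t + a) ^ (-(1 + 2 * s))) (Set.Ioi 0) := by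
  have h := integrableOn_Ioi_comp_mul_left_iff
    (fun t : ℝ => t ^ α * (t + a) ^ (-(1 + 2 * s))) 0 ha
  rw [mul_zero] at h
  refine h.1 (IntegrableOn.congr_fun ((integrableOn_beta s α hα).const_mul (a ^ (α - 2 * s - 1)))
    (fun u hu => (beta_scaled_eq s α a u ha hu).symm) measurableSet_Ioi)

lemma integral_beta_scaled (s α a : ℝ) (ha : 0 < a) :
    ∫ t in Set.Ioi (0 : ℝ), t ^ α * (t + a) ^ (-(1 + 2 * s))
      = (∫ t in Set.Ioi (0 : ℝ), t ^ α * (1 + t) ^ (-(1 + 2 * s))) * a ^ (α - 2 * s) := by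
  have h := integral_comp_mul_left_Ioi'
    (fun t : ℝ => t ^ α * (t + a) ^ (-(1 + 2 * s))) 0 ha
  rw [mul_zero] at h
  rw [← h, setIntegral_congr_fun measurableSet_Ioi
    (fun u hu => beta_scaled_eq s α a u ha hu), integral_const_mul, smul_eq_mul,
    ← mul_assoc, Real.rpow_sub_one ha.ne']
  field_simp

/-- The integrand in the coordinates `(t, w) = (yₙ, y′)`, with `a = -xₙ` and `v = x′`. -/
noncomputable def splitKernel (m : ℕ) (s α a : ℝ) (v : EuclideanSpace ℝ (Fin m))
    (q : ℝ × EuclideanSpace ℝ (Fin m)) : ℝ :=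
  q.1 ^ α * ((q.1 + a) ^ 2 + ‖v - q.2‖ ^ 2) ^ (-(((m : ℝ) + 1) + 2 * s) / 2)

lemma splitKernel_splitLast (m : ℕ) (s α : ℝ) (x y : EuclideanSpace ℝ (Fin (m + 1))) :
    splitKernel m s α (-x (Fin.last m)) (splitLast m x).2 (splitLast m y)
      = (y (Fin.last m)) ^ α / ‖x - y‖ ^ (((m : ℝ) + 1) + 2 * s) := by
  rw [splitKernel, ← sub_eq_add_neg, ← norm_sub_sq_splitLast, splitLast_fst,
    ← Real.rpow_natCast, ← Real.rpow_mul (norm_nonneg _), div_eq_mul_inv (y (Fin.last m) ^ α),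
    ← Real.rpow_neg (norm_nonneg _)]
  congr 2
  push_cast
  ring

lemma integral_splitKernel_slice (m : ℕ) (s α a t : ℝ) (ha : 0 < a) (ht : 0 < t)
    (v : EuclideanSpace ℝ (Fin m)) :
    ∫ w, splitKernel m s α a v (t, w)
      = Aconst m s * (t ^ α * (t + a) ^ (-(1 + 2 * s))) := by
  simp only [splitKernel]
  rw [integral_const_mul, integral_slice m s (t + a) (by positivity) v]
  ring

lemma integrable_splitKernel (m : ℕ) (s α a : ℝ) (hs : 0 < s)
    (hα : α ∈ Set.Ioo (0 : ℝ) (2 * s)) (ha : 0 < a) (v : EuclideanSpace ℝ (Fin m)) :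
    Integrable (splitKernel m s α a v)
      ((volume.restrict (Set.Ioi (0 : ℝ))).prod volume) := by
  have hmeas : Measurable (splitKernel m s α a v) := by
    unfold splitKernel
    fun_prop
  rw [integrable_prod_iff hmeas.aestronglyMeasurable]
  constructor
  · filter_upwards [ae_restrict_mem measurableSet_Ioi] with t ht
    exact (integrable_slice m s (t + a) hs (add_pos ht ha) v).const_mul (t ^ α)
  · refine ((integrableOn_beta_scaled s α a hα ha).const_mul (Aconst m s)).congr ?_
    filter_upwards [ae_restrict_mem measurableSet_Ioi] with t ht
    have ht : 0 < t := ht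
    rw [← integral_splitKernel_slice m s α a t ha ht v]
    refine integral_congr_ae (Eventually.of_forall fun w => ?_)
    refine (Real.norm_of_nonneg ?_).symm
    simp only [splitKernel]
    positivity

lemma integral_splitKernel (m : ℕ) (s α a : ℝ) (hs : 0 < s)
    (hα : α ∈ Set.Ioo (0 : ℝ) (2 * s)) (ha : 0 < a) (v : EuclideanSpace ℝ (Fin m)) :
    ∫ q, splitKernel m s α a v q ∂((volume.restrict (Set.Ioi (0 : ℝ))).prod volume)
      = Aconst m s * (∫ t in Set.Ioi (0:ℝ), t ^ α * (1 + t) ^ (-(1 + 2 * s))) *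
          a ^ (α - 2 * s) := by
  rw [integral_prod _ (integrable_splitKernel m s α a hs hα ha v),
    setIntegral_congr_fun measurableSet_Ioi
      (fun t ht => integral_splitKernel_slice m s α a t ha ht v),
    integral_const_mul, integral_beta_scaled s α a ha, mul_assoc]

/-- For `n = m+1 ≥ 2`, `s ∈ (0,1)`, `α ∈ (0,2s)` and `x ∈ ℝⁿ` with `xₙ < 0`:
`∫_{yₙ>0} yₙ^α/|x−y|^{n+2s} dy = A(n,s)·(∫₀^∞ t^α(1+t)^{−(1+2s)} dt)·|xₙ|^{α−2s}`,
all integrals being absolutely convergent. -/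
theorem stmt6 (m : ℕ) (hm : 1 ≤ m) (s α : ℝ) (hs : s ∈ Set.Ioo (0:ℝ) 1)
    (hα : α ∈ Set.Ioo (0:ℝ) (2 * s))
    (x : EuclideanSpace ℝ (Fin (m + 1))) (hx : x (Fin.last m) < 0) :
    IntegrableOn
      (fun y : EuclideanSpace ℝ (Fin (m + 1)) =>
        (y (Fin.last m)) ^ α / ‖x - y‖ ^ (((m : ℝ) + 1) + 2 * s))
      {y : EuclideanSpace ℝ (Fin (m + 1)) | 0 < y (Fin.last m)} ∧
    IntegrableOn (fun t : ℝ => t ^ α * (1 + t) ^ (-(1 + 2 * s))) (Set.Ioi 0) ∧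
    (∫ y in {y : EuclideanSpace ℝ (Fin (m + 1)) | 0 < y (Fin.last m)},
        (y (Fin.last m)) ^ α / ‖x - y‖ ^ (((m : ℝ) + 1) + 2 * s))
      = Aconst m s * (∫ t in Set.Ioi (0:ℝ), t ^ α * (1 + t) ^ (-(1 + 2 * s))) *
          |x (Fin.last m)| ^ (α - 2 * s) := by
  have ha : 0 < -x (Fin.last m) := neg_pos.2 hx
  have hset : {y : EuclideanSpace ℝ (Fin (m + 1)) | 0 < y (Fin.last m)}
      = splitLast m ⁻¹' (Set.Ioi 0 ×ˢ Set.univ) := by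
    ext y
    simp [splitLast_fst]
  have hmeas : (volume : Measure (ℝ × EuclideanSpace ℝ (Fin m))).restrict
      (Set.Ioi 0 ×ˢ Set.univ) = (volume.restrict (Set.Ioi (0 : ℝ))).prod volume := by
    rw [Measure.volume_eq_prod, ← Measure.prod_restrict, Measure.restrict_univ]
  have hemb := (splitLast m).measurableEmbedding
  simp only [← splitKernel_splitLast]
  rw [hset]
  refine ⟨?_, integrableOn_beta s α hα, ?_⟩
  · refine ((measurePreserving_splitLast m).integrableOn_comp_preimage hemb
      (f := splitKernel m s α (-x (Fin.last m)) (splitLast m x).2)).2 ?_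
    rw [IntegrableOn, hmeas]
    exact integrable_splitKernel m s α _ hs.1 hα ha _
  · rw [(measurePreserving_splitLast m).setIntegral_preimage_emb hemb, hmeas,
      integral_splitKernel m s α _ hs.1 hα ha, abs_of_neg hx]
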